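/- Let x ∈ ℝ^d with range(x) := max_j x_j − min_j x_j > 0, let b ≥ 1 be a natural number, set s := range(x)/(2^b − 1), and choose the integer zero point z := −round((min_j x_j)/s). Then for every coordinate j, the quantized integer value satisfies 0 ≤ round(x_j/s) + z ≤ 2^b − 1; that is, with min-max scaling the clamp operation clamp(·, 0, 2^b − 1) is the identity and no clipping error occurs. -/

import Mathlib

/-! With `n = 2 ^ b - 1`, dividing by the scale `s = range(x) / n` sends the coordinates into the
interval `[m / s, m / s + n]`, where `m` is the minimum. The length of this interval is an integer,
and rounding is monotone and commutes with integer translations, so the rounded values lie in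
`[round (m / s), round (m / s) + n]`. -/

/-- The range of a vector: `max_j x_j − min_j x_j`. -/
noncomputable def vrange {d : ℕ} (x : Fin d → ℝ) : ℝ := (⨆ j, x j) - (⨅ j, x j)

section Round

variable {α : Type*} [Field α] [LinearOrder α] [IsStrictOrderedRing α] [FloorRing α]

theorem monotone_round : Monotone (round : α → ℤ) := fun u v huv => by
  simpa only [round_eq] using Int.floor_mono (add_le_add_left huv (1 / 2))

theorem round_le_round_add_of_le_add_intCast {u v : α} {n : ℤ} (h : v ≤ u + n) :
    round v ≤ round u + n :=
  (monotone_round h).trans_eq (round_add_intCast u n)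

theorem round_div_sub_round_div_mem_Icc {m y s : α} {n : ℤ} (hs : 0 < s) (hmy : m ≤ y)
    (hys : y ≤ m + n * s) : round (y / s) - round (m / s) ∈ Set.Icc 0 n := by
  have hlower : m / s ≤ y / s := by gcongr
  have hupper : y / s ≤ m / s + n := by
    rwa [div_le_iff₀ hs, add_mul, div_mul_cancel₀ m hs.ne']
  exact ⟨sub_nonneg.mpr (monotone_round hlower),
    sub_le_iff_le_add'.mpr (round_le_round_add_of_le_add_intCast hupper)⟩

end Round

theorem minmax_no_clipping_general {ι : Type*} {x : ι → ℝ} (hbelow : BddBelow (Set.range x))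
    (habove : BddAbove (Set.range x)) (hr : 0 < (⨆ k, x k) - ⨅ k, x k) {n : ℤ} (hn : 0 < n)
    (j : ι) :
    round (x j / (((⨆ k, x k) - ⨅ k, x k) / n)) +
      -round ((⨅ k, x k) / (((⨆ k, x k) - ⨅ k, x k) / n)) ∈ Set.Icc 0 n := by
  have hn' : (0 : ℝ) < n := Int.cast_pos.mpr hn
  have hmax : x j ≤ (⨅ k, x k) + n * (((⨆ k, x k) - ⨅ k, x k) / n) := by
    rw [mul_div_cancel₀ _ hn'.ne', add_sub_cancel]
    exact le_ciSup habove j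
  exact round_div_sub_round_div_mem_Icc (div_pos hr hn') (ciInf_le hbelow j) hmax

/-- With the min-max scale `s = range(x)/(2^b − 1)` and zero point
`z = −round(min_j x_j / s)`, every quantized integer `round(x_j/s) + z` lies in
`[0, 2^b − 1]`, so clamping is the identity and no clipping error occurs. -/
theorem minmax_no_clipping
    (d : ℕ) (hd : 1 ≤ d) (x : Fin d → ℝ) (hr : 0 < vrange x)
    (b : ℕ) (hb : 1 ≤ b) :
    ∀ j : Fin d,
      0 ≤ round (x j / (vrange x / ((2 : ℝ) ^ b - 1))) +
          (-round ((⨅ k, x k) / (vrange x / ((2 : ℝ) ^ b - 1)))) ∧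
      round (x j / (vrange x / ((2 : ℝ) ^ b - 1))) +
          (-round ((⨅ k, x k) / (vrange x / ((2 : ℝ) ^ b - 1)))) ≤ 2 ^ b - 1 := by
  have hn : 0 < (2 : ℤ) ^ b - 1 := sub_pos.mpr (one_lt_pow₀ one_lt_two (by lia))
  exact_mod_cast minmax_no_clipping_general (Set.finite_range x).bddBelow
    (Set.finite_range x).bddAbove hr hn
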